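/- Let H be a 2-vertex-connected undirected graph with a DFS tree T rooted at r. Let v be a vertex and let u be a proper ancestor of v with u ≠ r and M(u) = v. Then {v,(u,p(u))} is a vertex-edge cut-pair of H if and only if there is no child c of v in T such that u is both an ancestor of high_p(c) and a proper descendant of low(c). -/

import Mathlib

/-- A DFS tree of the graph `H`, rooted at `r`, given by a parent function:
it is a spanning tree (every vertex reaches the root by iterating the parent
function, and each non-root vertex is adjacent to its parent), and every edge
of `H` joins a vertex to one of its ancestors. -/
structure DFSTree {V : Type*} (H : SimpleGraph V) (r : V) where
  par : V → V
  par_root : par r = r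
  reaches_root : ∀ v : V, ∃ n : ℕ, par^[n] v = r
  par_adj : ∀ v : V, v ≠ r → H.Adj v (par v)
  edge_anc : ∀ x y : V, H.Adj x y → (∃ n : ℕ, par^[n] x = y) ∨ (∃ n : ℕ, par^[n] y = x)

namespace DFSTree

variable {V : Type*} {H : SimpleGraph V} {r : V} (T : DFSTree H r)

/-- `a` is an ancestor of `b` (every vertex is an ancestor of itself). -/
def Anc (a b : V) : Prop := ∃ n : ℕ, T.par^[n] b = a

/-- `a` is a proper ancestor of `b`. -/
def PAnc (a b : V) : Prop := T.Anc a b ∧ a ≠ b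

/-- `(x,y)` is a back-edge: an edge of `H` from `x` to an ancestor `y` of `x`
which is not the tree edge from `x` to its parent. -/
def BackEdge (x y : V) : Prop := H.Adj x y ∧ T.Anc y x ∧ T.par x ≠ y

/-- The set of descendants of `v` joined by a back-edge to a proper ancestor of `v`. -/
def MSet (v : V) : Set V := {x | T.Anc v x ∧ ∃ y, T.PAnc y v ∧ T.BackEdge x y}

/-- `m = M(v)`: `m` is the nearest common ancestor of all descendants of `v`
joined by a back-edge to a proper ancestor of `v`. -/
def IsM (v m : V) : Prop :=
  (∀ x ∈ T.MSet v, T.Anc m x) ∧ ∀ m' : V, (∀ x ∈ T.MSet v, T.Anc m' x) → T.Anc m' m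

/-- The set of descendants of `v` joined by a back-edge to a proper ancestor of `p(v)`. -/
def MpSet (v : V) : Set V := {x | T.Anc v x ∧ ∃ y, T.PAnc y (T.par v) ∧ T.BackEdge x y}

/-- `m = M_p(v)`: `m` is the nearest common ancestor of all descendants of `v`
joined by a back-edge to a proper ancestor of `p(v)`. -/
def IsMp (v m : V) : Prop :=
  (∀ x ∈ T.MpSet v, T.Anc m x) ∧ ∀ m' : V, (∀ x ∈ T.MpSet v, T.Anc m' x) → T.Anc m' m

/-- `h = high(v)`: `h` is the deepest proper ancestor of `v` joined by a
back-edge to a descendant of `v`. -/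
def IsHigh (v h : V) : Prop :=
  T.PAnc h v ∧ (∃ x, T.Anc v x ∧ T.BackEdge x h) ∧
    ∀ h' : V, T.PAnc h' v → (∃ x, T.Anc v x ∧ T.BackEdge x h') → T.Anc h' h

/-- `h = high_p(v)`: `h` is the deepest proper ancestor of `p(v)` joined by a
back-edge to a descendant of `v`. -/
def IsHighP (v h : V) : Prop :=
  T.PAnc h (T.par v) ∧ (∃ x, T.Anc v x ∧ T.BackEdge x h) ∧
    ∀ h' : V, T.PAnc h' (T.par v) → (∃ x, T.Anc v x ∧ T.BackEdge x h') → T.Anc h' h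

/-- `l = low(v)`: `l` is the proper ancestor of `v` nearest to the root joined
by a back-edge to a descendant of `v`. -/
def IsLow (v l : V) : Prop :=
  T.PAnc l v ∧ (∃ x, T.Anc v x ∧ T.BackEdge x l) ∧
    ∀ l' : V, T.PAnc l' v → (∃ x, T.Anc v x ∧ T.BackEdge x l') → T.Anc l l'

end DFSTree

/-- `{v, e}` is a vertex-edge cut-pair of `H`: `e` is an edge of `H` and deleting
both `v` (with its incident edges) and `e` disconnects `H`. -/
def VECutPair {V : Type*} (H : SimpleGraph V) (v : V) (e : Sym2 V) : Prop :=
  e ∈ H.edgeSet ∧ ¬ ((H.deleteEdges {e}).induce {u | u ≠ v}).Connected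

/-- `{e, e'}` is a cut-pair of `H`: `e` and `e'` are distinct edges of `H` whose
deletion disconnects `H`. -/
def ECutPair {V : Type*} (H : SimpleGraph V) (e e' : Sym2 V) : Prop :=
  e ∈ H.edgeSet ∧ e' ∈ H.edgeSet ∧ e ≠ e' ∧ ¬ (H.deleteEdges {e, e'}).Connected

/-- An undirected graph is 2-edge-connected if it is connected and has no bridge. -/
def TwoEdgeConnected {W : Type*} (G : SimpleGraph W) : Prop :=
  G.Connected ∧ ∀ e ∈ G.edgeSet, ¬ G.IsBridge e

/-- An undirected graph is 2-vertex-connected if it has at least three vertices,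
is connected, and deleting any single vertex leaves it connected. -/
def TwoVertexConnected {W : Type*} (G : SimpleGraph W) : Prop :=
  3 ≤ Nat.card W ∧ G.Connected ∧ ∀ v : W, (G.induce {u | u ≠ v}).Connected

/-!
After deleting `v`, the tree falls into pieces whose tree edges avoid `(u, p(u))`: the vertices
outside the subtree of `u`, the descendants of `u` that are not descendants of `v`, and the subtree
of each child of `v`. Once `(u, p(u))` is deleted as well, no edge joins the first two pieces,
because every back-edge out of the subtree of `u` starts in the subtree of `v = M(u)`; nor does an
edge join the subtrees of two children. Hence the first two pieces are connected exactly when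
back-edges from the subtree of a single child `c` of `v` reach both of them. The endpoint of such
back-edges nearest to `v` is `high_p(c)` and the one nearest to the root is `low(c)`. Every other
child subtree is attached to one of the first two pieces because `v` is not a cut vertex.
-/

section Saturated

variable {V : Type*} {G : SimpleGraph V} {s : Set V}

/-- `S` is a union of connected components of the subgraph of `G` induced on `s`, as far as its
vertices in `s` are concerned. Working with such sets replaces reachability between vertices of the
subtype `s` by membership of vertices of `V`. -/
def SaturatedOn (G : SimpleGraph V) (s S : Set V) : Prop :=
  ∀ ⦃x⦄, x ∈ s → ∀ ⦃y⦄, y ∈ s → G.Adj x y → (x ∈ S ↔ y ∈ S)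

theorem induce_connected_of_forall_saturatedOn {a : V} (ha : a ∈ s)
    (h : ∀ S, SaturatedOn G s S → a ∈ S → s ⊆ S) : (G.induce s).Connected := by
  let component : Set V := {x | ∃ hx : x ∈ s, (G.induce s).Reachable ⟨a, ha⟩ ⟨x, hx⟩}
  have hsat : SaturatedOn G s component := fun x hx y hy hxy =>
    have hreach : (G.induce s).Reachable ⟨x, hx⟩ ⟨y, hy⟩ :=
      (SimpleGraph.induce_adj.2 hxy).reachable
    ⟨fun ⟨_, hax⟩ => ⟨hy, hax.trans hreach⟩, fun ⟨_, hay⟩ => ⟨hx, hay.trans hreach.symm⟩⟩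
  refine SimpleGraph.connected_iff_exists_forall_reachable _ |>.2 ⟨⟨a, ha⟩, fun ⟨x, hx⟩ => ?_⟩
  exact (h component hsat ⟨ha, .refl _⟩ hx).2

theorem exists_adj_mem_notMem_of_induce_connected (h : (G.induce s).Connected) {S : Set V}
    {a b : V} (has : a ∈ s) (hbs : b ∈ s) (haS : a ∈ S) (hbS : b ∉ S) :
    ∃ x ∈ s, ∃ y ∈ s, G.Adj x y ∧ x ∈ S ∧ y ∉ S := by
  obtain ⟨walk⟩ := h.preconnected ⟨a, has⟩ ⟨b, hbs⟩
  obtain ⟨d, -, hfst, hsnd⟩ := walk.exists_boundary_dart (Subtype.val ⁻¹' S) haS hbS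
  exact ⟨d.fst, d.fst.2, d.snd, d.snd.2, d.adj, hfst, hsnd⟩

end Saturated

theorem exists_forall_rel_of_isChain {α : Type*} {rel : α → α → Prop} [Std.Refl rel]
    [IsTrans α rel] {s : Set α} (hs : IsChain rel s) (hfin : s.Finite) (hne : s.Nonempty) :
    ∃ m ∈ s, ∀ x ∈ s, rel x m := by
  have := hfin.to_subtype
  have := hne.to_subtype
  obtain ⟨m, hm⟩ := hs.directedOn.directed_val.finite_le id
  exact ⟨m, m.2, fun x hx => hm ⟨x, hx⟩⟩

namespace DFSTree

variable {V : Type*} {H : SimpleGraph V} {r : V} {T : DFSTree H r} {a b c u v x y : V}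

section Ancestors

theorem anc_refl (T : DFSTree H r) (a : V) : T.Anc a a := ⟨0, rfl⟩

theorem anc_par (T : DFSTree H r) (a : V) : T.Anc (T.par a) a := ⟨1, rfl⟩

theorem Anc.trans (hab : T.Anc a b) (hbc : T.Anc b c) : T.Anc a c := by
  obtain ⟨n, rfl⟩ := hab
  obtain ⟨m, rfl⟩ := hbc
  exact ⟨n + m, Function.iterate_add_apply ..⟩

instance (T : DFSTree H r) : Std.Refl T.Anc := ⟨T.anc_refl⟩

instance (T : DFSTree H r) : IsTrans V T.Anc := ⟨fun _ _ _ => Anc.trans⟩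

theorem Anc.par_par (h : T.Anc a b) : T.Anc (T.par a) (T.par b) := by
  obtain ⟨n, rfl⟩ := h
  exact ⟨n, (Function.Commute.refl T.par).iterate_left n b⟩

theorem Anc.eq_or_anc_par (h : T.Anc a b) : a = b ∨ T.Anc a (T.par b) := by
  obtain ⟨_ | n, rfl⟩ := h
  · exact .inl rfl
  · exact .inr ⟨n, rfl⟩

theorem Anc.eq_root (h : T.Anc a r) : a = r := by
  obtain ⟨n, rfl⟩ := h
  exact Function.iterate_fixed T.par_root n

theorem Anc.total (ha : T.Anc a x) (hb : T.Anc b x) : T.Anc a b ∨ T.Anc b a := by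
  obtain ⟨n, rfl⟩ := ha
  obtain ⟨m, rfl⟩ := hb
  rcases le_total n m with h | h
  · exact .inr ⟨m - n, by rw [← Function.iterate_add_apply, Nat.sub_add_cancel h]⟩
  · exact .inl ⟨n - m, by rw [← Function.iterate_add_apply, Nat.sub_add_cancel h]⟩

theorem eq_root_of_isPeriodicPt {n : ℕ} (hn : 0 < n) (h : Function.IsPeriodicPt T.par n a) :
    a = r := by
  obtain ⟨N, hN⟩ := T.reaches_root a
  have hle : N ≤ N * n := Nat.le_mul_of_pos_right N hn
  calc a = T.par^[N * n] a := (h.const_mul N).eq.symm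
    _ = T.par^[N * n - N] (T.par^[N] a) := by
      rw [← Function.iterate_add_apply, Nat.sub_add_cancel hle]
    _ = r := by rw [hN, Function.iterate_fixed T.par_root]

theorem not_anc_par (ha : a ≠ r) : ¬ T.Anc a (T.par a) :=
  fun ⟨n, hn⟩ => ha (eq_root_of_isPeriodicPt n.succ_pos hn)

theorem Anc.antisymm (hab : T.Anc a b) (hba : T.Anc b a) : a = b := by
  rcases hab.eq_or_anc_par with h | h
  · exact h
  · have hb : b = r := by_contra fun hb => not_anc_par hb (hba.trans h)
    subst hb
    exact hab.eq_root

theorem PAnc.not_anc (h : T.PAnc a b) : ¬ T.Anc b a :=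
  fun hba => h.2 (h.1.antisymm hba)

theorem Anc.pAnc_of_not_anc (h : T.Anc a b) (hba : ¬ T.Anc b a) : T.PAnc a b :=
  ⟨h, fun hab => hba (hab ▸ T.anc_refl a)⟩

theorem Anc.trans_pAnc (hab : T.Anc a b) (hbc : T.PAnc b c) : T.PAnc a c :=
  (hab.trans hbc.1).pAnc_of_not_anc fun hca => hbc.not_anc (hca.trans hab)

theorem PAnc.trans_anc (hab : T.PAnc a b) (hbc : T.Anc b c) : T.PAnc a c :=
  (hab.1.trans hbc).pAnc_of_not_anc fun hca => hab.not_anc (hbc.trans hca)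

theorem PAnc.anc_par (h : T.PAnc a b) : T.Anc a (T.par b) :=
  h.1.eq_or_anc_par.resolve_left h.2

theorem PAnc.ne_root (h : T.PAnc a b) : b ≠ r := by
  rintro rfl
  exact h.2 h.1.eq_root

theorem pAnc_of_adj_of_anc_of_not_anc (hxy : H.Adj x y) (hx : T.Anc a x) (hy : ¬ T.Anc a y) :
    T.PAnc y a := by
  rcases T.edge_anc x y hxy with hyx | hxy
  · exact ((hx.total hyx).resolve_left hy).pAnc_of_not_anc hy
  · exact absurd (hx.trans hxy) hy

theorem eq_of_sym2_par_eq (hx : x ≠ r) (h : s(x, T.par x) = s(u, T.par u)) : x = u := by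
  rcases Sym2.eq_iff.1 h with ⟨hxu, -⟩ | ⟨hxu, hux⟩
  · exact hxu
  · exact absurd (hux ▸ hxu ▸ T.anc_par u) (not_anc_par hx)

theorem finite_setOf_anc (T : DFSTree H r) (b : V) : {a | T.Anc a b}.Finite := by
  obtain ⟨n, hn⟩ := T.reaches_root b
  induction n generalizing b with
  | zero =>
    obtain rfl : b = r := hn
    exact (Set.finite_singleton b).subset fun a ha => Anc.eq_root ha
  | succ n ih => exact ((ih (T.par b) hn).insert b).subset fun a ha => Anc.eq_or_anc_par ha

variable {P : V → Prop}

theorem exists_deepest (hP : ∀ a, P a → T.Anc a b) (hne : ∃ a, P a) :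
    ∃ m, P m ∧ ∀ a, P a → T.Anc a m :=
  exists_forall_rel_of_isChain (rel := T.Anc) (s := {a | P a})
    (fun a ha a' ha' _ => (hP a ha).total (hP a' ha')) ((T.finite_setOf_anc b).subset hP) hne

theorem exists_shallowest (hP : ∀ a, P a → T.Anc a b) (hne : ∃ a, P a) :
    ∃ m, P m ∧ ∀ a, P a → T.Anc m a :=
  exists_forall_rel_of_isChain (rel := Function.swap T.Anc) (s := {a | P a})
    (fun a ha a' ha' _ => (hP a' ha').total (hP a ha)) ((T.finite_setOf_anc b).subset hP) hne

end Ancestors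

section Children

/-- `c` is a child of `v` in the tree. The root has to be excluded because it is its own parent. -/
def IsChild (T : DFSTree H r) (c v : V) : Prop := T.par c = v ∧ c ≠ r

theorem IsChild.pAnc (hc : T.IsChild c v) : T.PAnc v c :=
  hc.1 ▸ (T.anc_par c).pAnc_of_not_anc (not_anc_par hc.2)

theorem exists_isChild_anc (h : T.PAnc v x) : ∃ c, T.IsChild c v ∧ T.Anc c x := by
  obtain ⟨c, ⟨hvc, hcx⟩, hmin⟩ := exists_shallowest (P := fun c => T.PAnc v c ∧ T.Anc c x)
    (fun _ hc => hc.2) ⟨x, h, T.anc_refl x⟩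
  refine ⟨c, ⟨by_contra fun hne => ?_, hvc.ne_root⟩, hcx⟩
  have hvp : T.PAnc v (T.par c) := ⟨hvc.anc_par, Ne.symm hne⟩
  exact not_anc_par hvc.ne_root (hmin _ ⟨hvp, (T.anc_par c).trans hcx⟩)

/-- Some descendant of `c` is joined by a back-edge to `y`; `high_p(c)` and `low(c)` are extremal
such `y`. -/
def SubtreeBackEdge (T : DFSTree H r) (c y : V) : Prop := ∃ x, T.Anc c x ∧ T.BackEdge x y

theorem subtreeBackEdge_of_adj (hxy : H.Adj x y) (hx : T.Anc c x) (hy : T.PAnc y (T.par c)) :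
    T.SubtreeBackEdge c y := by
  refine ⟨x, hx, hxy, hy.1.trans ((T.anc_par c).trans hx), ?_⟩
  rintro rfl
  exact hy.not_anc hx.par_par

theorem exists_isHighP (hy : T.PAnc y (T.par c)) (hcy : T.SubtreeBackEdge c y) :
    ∃ hp, T.IsHighP c hp := by
  obtain ⟨hp, ⟨hpar, hback⟩, hmax⟩ :=
    exists_deepest (P := fun y => T.PAnc y (T.par c) ∧ T.SubtreeBackEdge c y)
      (fun _ h => h.1.1) ⟨y, hy, hcy⟩
  exact ⟨hp, hpar, hback, fun y hy hcy => hmax y ⟨hy, hcy⟩⟩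

theorem exists_isLow (hy : T.PAnc y c) (hcy : T.SubtreeBackEdge c y) : ∃ lo, T.IsLow c lo := by
  obtain ⟨lo, ⟨hc, hback⟩, hmin⟩ :=
    exists_shallowest (P := fun y => T.PAnc y c ∧ T.SubtreeBackEdge c y)
      (fun _ h => h.1.1) ⟨y, hy, hcy⟩
  exact ⟨lo, hc, hback, fun y hy hcy => hmin y ⟨hy, hcy⟩⟩

theorem IsChild.pAnc_of_adj (hc : T.IsChild c v) (hxy : H.Adj x y) (hx : T.Anc c x)
    (hy : ¬ T.Anc c y) (hyv : y ≠ v) : T.PAnc y v :=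
  ⟨hc.1 ▸ (pAnc_of_adj_of_anc_of_not_anc hxy hx hy).anc_par, hyv⟩

theorem IsChild.exists_subtreeBackEdge (hc : T.IsChild c v) (hv : v ≠ r)
    (hconn : (H.induce {w | w ≠ v}).Connected) : ∃ y, T.PAnc y v ∧ T.SubtreeBackEdge c y := by
  obtain ⟨x, -, y, hyv, hxy, hx, hy⟩ :=
    exists_adj_mem_notMem_of_induce_connected hconn (S := {x | T.Anc c x})
      hc.pAnc.2.symm hv.symm (T.anc_refl c) (fun h => hc.2 (Anc.eq_root h))
  have hyv : T.PAnc y v := hc.pAnc_of_adj hxy hx hy hyv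
  exact ⟨y, hyv, subtreeBackEdge_of_adj hxy hx (hc.1.symm ▸ hyv)⟩

/-- Back-edges from the subtree of `c` reach the tree path from `u` down to the parent of `c`
(excluding that parent). -/
def AttachedBelow (T : DFSTree H r) (u c : V) : Prop :=
  ∃ y, T.Anc u y ∧ T.PAnc y (T.par c) ∧ T.SubtreeBackEdge c y

/-- Back-edges from the subtree of `c` reach both sides of the tree edge from `u` to its parent, so
that this subtree reconnects the two sides when that edge is deleted. -/
def Straddles (T : DFSTree H r) (u c : V) : Prop :=
  T.AttachedBelow u c ∧ ∃ z, T.PAnc z u ∧ T.SubtreeBackEdge c z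

theorem straddles_iff_exists_isHighP_isLow (huc : T.Anc u (T.par c)) :
    T.Straddles u c ↔
      ∃ hp lo, T.IsHighP c hp ∧ T.IsLow c lo ∧ T.Anc u hp ∧ T.PAnc lo u := by
  constructor
  · rintro ⟨⟨y, huy, hy, hcy⟩, z, hzu, hcz⟩
    have hzc : T.PAnc z c := hzu.trans_anc (huc.trans (T.anc_par c))
    obtain ⟨hp, hhp⟩ := exists_isHighP hy hcy
    obtain ⟨lo, hlo⟩ := exists_isLow hzc hcz
    exact ⟨hp, lo, hhp, hlo, huy.trans (hhp.2.2 y hy hcy), (hlo.2.2 z hzc hcz).trans_pAnc hzu⟩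
  · rintro ⟨hp, lo, hhp, hlo, huhp, hlou⟩
    exact ⟨⟨hp, huhp, hhp.1, hhp.2.1⟩, lo, hlou, hlo.2.1⟩

end Children

section Pieces

/-- The graph `H` without the tree edge from `u` to its parent. -/
abbrev deleteParentEdge (T : DFSTree H r) (u : V) : SimpleGraph V :=
  H.deleteEdges {s(u, T.par u)}

theorem deleteParentEdge_adj :
    (T.deleteParentEdge u).Adj x y ↔ H.Adj x y ∧ s(x, y) ≠ s(u, T.par u) :=
  SimpleGraph.deleteEdges_adj

variable {S : Set V}

theorem mem_iff_of_anc (hS : SaturatedOn (T.deleteParentEdge u) {w | w ≠ v} S) (hax : T.Anc a x)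
    (hv : ¬ (T.Anc a v ∧ T.Anc v x)) (hu : ¬ (T.Anc a (T.par u) ∧ T.Anc u x)) :
    x ∈ S ↔ a ∈ S := by
  obtain ⟨n, hn⟩ := hax
  induction n generalizing x with
  | zero => exact hn ▸ Iff.rfl
  | succ n ih =>
    have hax : T.Anc a x := ⟨n + 1, hn⟩
    have hap : T.Anc a (T.par x) := ⟨n, hn⟩
    have hpx := T.anc_par x
    have hpar : T.par x ∈ S ↔ a ∈ S :=
      ih (fun h => hv ⟨h.1, h.2.trans hpx⟩) (fun h => hu ⟨h.1, h.2.trans hpx⟩) hn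
    by_cases hx : x = r
    · subst hx
      rwa [T.par_root] at hpar
    have hxv : x ≠ v := fun h => hv ⟨h ▸ hax, h ▸ T.anc_refl x⟩
    have hpv : T.par x ≠ v := fun h => hv ⟨h ▸ hap, h ▸ hpx⟩
    have hedge : s(x, T.par x) ≠ s(u, T.par u) := fun h => by
      obtain rfl := eq_of_sym2_par_eq hx h
      exact hu ⟨hap, T.anc_refl x⟩
    exact (hS hxv hpv (deleteParentEdge_adj.2 ⟨T.par_adj x hx, hedge⟩)).trans hpar

theorem mem_iff_root_mem (hS : SaturatedOn (T.deleteParentEdge u) {w | w ≠ v} S)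
    (huv : T.Anc u v) (hx : ¬ T.Anc u x) : x ∈ S ↔ r ∈ S :=
  mem_iff_of_anc hS (T.reaches_root x) (fun h => hx (huv.trans h.2)) (fun h => hx h.2)

theorem mem_iff_mem_of_anc_of_not_anc (hS : SaturatedOn (T.deleteParentEdge u) {w | w ≠ v} S)
    (hu : u ≠ r) (hux : T.Anc u x) (hvx : ¬ T.Anc v x) : x ∈ S ↔ u ∈ S :=
  mem_iff_of_anc hS hux (fun h => hvx h.2) (fun h => not_anc_par hu h.1)

theorem IsChild.mem_iff_mem_of_anc (hc : T.IsChild c v)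
    (hS : SaturatedOn (T.deleteParentEdge u) {w | w ≠ v} S) (huv : T.Anc u v)
    (hcx : T.Anc c x) : x ∈ S ↔ c ∈ S :=
  mem_iff_of_anc hS hcx (fun h => hc.pAnc.not_anc h.1)
    (fun h => hc.pAnc.not_anc (h.1.trans ((T.anc_par u).trans huv)))

theorem IsChild.mem_iff_mem_of_subtreeBackEdge (hc : T.IsChild c v)
    (hS : SaturatedOn (T.deleteParentEdge u) {w | w ≠ v} S) (huv : T.PAnc u v)
    (hcy : T.SubtreeBackEdge c y) (hyv : y ≠ v) : c ∈ S ↔ y ∈ S := by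
  obtain ⟨x, hcx, hxy, -, -⟩ := hcy
  have hvx : T.PAnc v x := hc.pAnc.trans_anc hcx
  have hedge : s(x, y) ≠ s(u, T.par u) := fun h => by
    rcases Sym2.eq_iff.1 h with ⟨rfl, -⟩ | ⟨rfl, -⟩
    · exact huv.not_anc hvx.1
    · exact huv.not_anc (hvx.1.trans (T.anc_par u))
  exact (hc.mem_iff_mem_of_anc hS huv.1 hcx).symm.trans
    (hS hvx.2.symm hyv (deleteParentEdge_adj.2 ⟨hxy, hedge⟩))

end Pieces

section Connectivity

theorem IsChild.induce_deleteParentEdge_connected (hc : T.IsChild c v) (hcu : T.Straddles u c)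
    (hu : u ≠ r) (huv : T.PAnc u v) (hconn : (H.induce {w | w ≠ v}).Connected) :
    ((T.deleteParentEdge u).induce {w | w ≠ v}).Connected := by
  refine induce_connected_of_forall_saturatedOn huv.2 fun S hS huS => ?_
  obtain ⟨⟨y, huy, hy, hcy⟩, z, hzu, hcz⟩ := hcu
  rw [hc.1] at hy
  have hcS : c ∈ S := (hc.mem_iff_mem_of_subtreeBackEdge hS huv hcy hy.2).2
    ((mem_iff_mem_of_anc_of_not_anc hS hu huy hy.not_anc).2 huS)
  have hrS : r ∈ S := (mem_iff_root_mem hS huv.1 hzu.not_anc).1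
    ((hc.mem_iff_mem_of_subtreeBackEdge hS huv hcz (hzu.trans_anc huv.1).2).1 hcS)
  have hnot_below : ∀ x, ¬ T.Anc v x → x ∈ S := fun x hvx => by
    by_cases hux : T.Anc u x
    · exact (mem_iff_mem_of_anc_of_not_anc hS hu hux hvx).2 huS
    · exact (mem_iff_root_mem hS huv.1 hux).2 hrS
  intro x hxv
  by_cases hvx : T.Anc v x
  · obtain ⟨d, hd, hdx⟩ := exists_isChild_anc ⟨hvx, Ne.symm hxv⟩
    obtain ⟨w, hwv, hdw⟩ := hd.exists_subtreeBackEdge huv.ne_root hconn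
    have hdS : d ∈ S := (hd.mem_iff_mem_of_subtreeBackEdge hS huv hdw hwv.2).2
      (hnot_below w hwv.not_anc)
    exact (hd.mem_iff_mem_of_anc hS huv.1 hdx).2 hdS
  · exact hnot_below x hvx

/-- The descendants of `u` that are not descendants of `v`, together with the subtrees of those
children of `v` that are attached to them. When no child of `v` straddles `u` and `v` is a common
ancestor of `T.MSet u`, this is the component of `u` once `v` and the edge from `u` to its parent
are deleted. -/
def lowerSide (T : DFSTree H r) (u v : V) : Set V :=
  {x | T.Anc u x ∧ ¬ T.Anc v x} ∪ {x | ∃ c, T.IsChild c v ∧ T.Anc c x ∧ T.AttachedBelow u c}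

theorem root_notMem_lowerSide (hu : u ≠ r) : r ∉ T.lowerSide u v := by
  rintro (⟨hur, -⟩ | ⟨c, hc, hcr, -⟩)
  · exact hu hur.eq_root
  · exact hc.2 hcr.eq_root

theorem mem_lowerSide_of_adj (hM : ∀ x ∈ T.MSet u, T.Anc v x) (hux : T.Anc u x)
    (hvx : ¬ T.Anc v x) (hxy : (T.deleteParentEdge u).Adj x y) (hyv : y ≠ v) :
    y ∈ T.lowerSide u v := by
  obtain ⟨hxy, hedge⟩ := deleteParentEdge_adj.1 hxy
  have huy : T.Anc u y := by
    by_contra huy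
    have hyu : T.PAnc y u := pAnc_of_adj_of_anc_of_not_anc hxy hux huy
    have hpar : T.par x ≠ y := by
      rintro rfl
      rcases hux.eq_or_anc_par with rfl | h
      · exact hedge rfl
      · exact huy h
    exact hvx (hM x ⟨hux, y, hyu, hxy, hyu.1.trans hux, hpar⟩)
  by_cases hvy : T.Anc v y
  · obtain ⟨c, hc, hcy⟩ := exists_isChild_anc ⟨hvy, hyv.symm⟩
    have hxv : T.PAnc x (T.par c) := hc.1 ▸ pAnc_of_adj_of_anc_of_not_anc hxy.symm hvy hvx
    exact .inr ⟨c, hc, hcy, x, hux, hxv, subtreeBackEdge_of_adj hxy.symm hcy hxv⟩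
  · exact .inl ⟨huy, hvy⟩

theorem IsChild.straddles_of_adj (hc : T.IsChild c v) (huv : T.Anc u v) (hcu : T.AttachedBelow u c)
    (hcx : T.Anc c x) (hxy : H.Adj x y) (hyv : y ≠ v) (hy : y ∉ T.lowerSide u v) :
    T.Straddles u c := by
  have hcy : ¬ T.Anc c y := fun hcy => hy (.inr ⟨c, hc, hcy, hcu⟩)
  have hyv : T.PAnc y v := hc.pAnc_of_adj hxy hcx hcy hyv
  have huy : ¬ T.Anc u y := fun huy => hy (.inl ⟨huy, hyv.not_anc⟩)
  have hyu : T.PAnc y u := ((huv.total hyv.1).resolve_left huy).pAnc_of_not_anc huy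
  exact ⟨hcu, y, hyu, subtreeBackEdge_of_adj hxy hcx (hc.1.symm ▸ hyv)⟩

theorem exists_straddles_of_connected (hu : u ≠ r) (huv : T.PAnc u v)
    (hM : ∀ x ∈ T.MSet u, T.Anc v x)
    (hconn : ((T.deleteParentEdge u).induce {w | w ≠ v}).Connected) :
    ∃ c, T.IsChild c v ∧ T.Straddles u c := by
  obtain ⟨x, -, y, hyv, hxy, hx, hy⟩ :=
    exists_adj_mem_notMem_of_induce_connected hconn huv.2 huv.ne_root.symm
      (S := T.lowerSide u v) (.inl ⟨T.anc_refl u, huv.not_anc⟩) (root_notMem_lowerSide hu)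
  rcases hx with ⟨hux, hvx⟩ | ⟨c, hc, hcx, hcu⟩
  · exact absurd (mem_lowerSide_of_adj hM hux hvx hxy hyv) hy
  · exact ⟨c, hc, hc.straddles_of_adj huv.1 hcu hcx (deleteParentEdge_adj.1 hxy).1 hyv hy⟩

theorem vECutPair_iff_not_exists_straddles (hu : u ≠ r) (huv : T.PAnc u v)
    (hconn : (H.induce {w | w ≠ v}).Connected) (hM : ∀ x ∈ T.MSet u, T.Anc v x) :
    VECutPair H v s(u, T.par u) ↔ ¬ ∃ c, T.IsChild c v ∧ T.Straddles u c := by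
  have hedge : s(u, T.par u) ∈ H.edgeSet := T.par_adj u hu
  refine (and_iff_right hedge).trans (not_congr ⟨exists_straddles_of_connected hu huv hM, ?_⟩)
  rintro ⟨c, hc, hcu⟩
  exact hc.induce_deleteParentEdge_connected hcu hu huv hconn

end Connectivity

end DFSTree

theorem stmt_11_general {V : Type*} {H : SimpleGraph V} {r : V} (T : DFSTree H r) {v u : V}
    (hconn : (H.induce {w | w ≠ v}).Connected) (hu : u ≠ r) (huv : T.PAnc u v)
    (hM : ∀ x ∈ T.MSet u, T.Anc v x) :
    VECutPair H v s(u, T.par u) ↔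
      ¬ ∃ (c hp lo : V), T.par c = v ∧ c ≠ r ∧ T.IsHighP c hp ∧ T.IsLow c lo ∧
        T.Anc u hp ∧ T.PAnc lo u := by
  rw [DFSTree.vECutPair_iff_not_exists_straddles hu huv hconn hM]
  refine not_congr (exists_congr fun c => ?_)
  have huc : T.par c = v → T.Anc u (T.par c) := fun hcv => hcv.symm ▸ huv.1
  constructor
  · rintro ⟨⟨hcv, hcr⟩, hcu⟩
    obtain ⟨hp, lo, h⟩ := (DFSTree.straddles_iff_exists_isHighP_isLow (huc hcv)).1 hcu
    exact ⟨hp, lo, hcv, hcr, h⟩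
  · rintro ⟨hp, lo, hcv, hcr, h⟩
    exact ⟨⟨hcv, hcr⟩, (DFSTree.straddles_iff_exists_isHighP_isLow (huc hcv)).2 ⟨hp, lo, h⟩⟩

theorem stmt_11 {V : Type*} [Fintype V] (H : SimpleGraph V) (r : V)
    (T : DFSTree H r) (hH : TwoVertexConnected H) (v u : V) (hu : u ≠ r)
    (huv : T.PAnc u v) (hM : T.IsM u v) :
    VECutPair H v s(u, T.par u) ↔
      ¬ ∃ (c hp lo : V), T.par c = v ∧ c ≠ r ∧ T.IsHighP c hp ∧ T.IsLow c lo ∧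
        T.Anc u hp ∧ T.PAnc lo u :=
  stmt_11_general T (hH.2.2 v) hu huv hM.1
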